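/- Let k be a rational number, let α ∈ ℂ be a root of P_k = X³ − kX² + (k−3)X + 1 with α ∉ ℚ, and let c, d be integers, not both zero, such that D := c³ + 3c²d − c²dk − cd²k − d³ ≠ 0 and cα + d ≠ 0. Then ω := ((c+d)α − c)/(cα + d) is a root of X³ − tX² + (t−3)X + 1, where t = (c³k + 9c²d + 9cd² − 3cd²k − d³k)/D. -/

import Mathlib

/-! The Möbius map `σ : x ↦ (x - 1) / x` has order three and permutes the roots of `P_k`. Both
cubic forms `x³ - 3xy² + y³` and `xy(x - y)` change sign under the matrix of `σ`, and over `ℚ` they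
span the space of cubic forms that do; the roots of `P_k` are the points where the quotient of the
two forms is `k`. A matrix `d + c[1, -1; 1, 0]` commutes with that of `σ`, so it maps this
two-dimensional space to itself. Hence the induced map on roots acts on the parameter `k` by a
fractional linear transformation, whose denominator `D` is the homogenization of `P_k` evaluated
at `(-d, c)`. -/

open Polynomial

section CommRing

variable {R : Type*} [CommRing R]

/-- The simplest cubic polynomial `P_k`, for a parameter `k` in any commutative ring. -/
noncomputable def simplestCubic (k : R) : R[X] :=
  X ^ 3 - C k * X ^ 2 + C (k - 3) * X + 1

/-- The numerator of the parameter `(x³ - 3x + 1) / (x² - x)` of the simplest cubic with root `x`,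
as a binary cubic form, so that it can be evaluated at fractions without dividing. -/
def simplestCubicNum (x y : R) : R :=
  x ^ 3 - 3 * x * y ^ 2 + y ^ 3

/-- The denominator of the parameter `(x³ - 3x + 1) / (x² - x)` of the simplest cubic with root
`x`, as a binary cubic form to be used together with `simplestCubicNum`. -/
def simplestCubicDen (x y : R) : R :=
  x * y * (x - y)

theorem simplestCubicNum_mobius (c d x y : R) :
    simplestCubicNum ((c + d) * x - c * y) (c * x + d * y) =
      simplestCubicNum (-c) d * simplestCubicNum x y -
        9 * simplestCubicDen (-d) c * simplestCubicDen x y := by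
  simp only [simplestCubicNum, simplestCubicDen]
  ring

theorem simplestCubicDen_mobius (c d x y : R) :
    simplestCubicDen ((c + d) * x - c * y) (c * x + d * y) =
      simplestCubicDen (-d) c * simplestCubicNum x y -
        simplestCubicNum (-d) c * simplestCubicDen x y := by
  simp only [simplestCubicNum, simplestCubicDen]
  ring

theorem isRoot_simplestCubic_iff {k x : R} :
    (simplestCubic k).IsRoot x ↔ x ^ 3 - k * x ^ 2 + (k - 3) * x + 1 = 0 := by
  simp [simplestCubic, IsRoot.def]

end CommRing

section Field

variable {K : Type*} [Field K]

theorem isRoot_simplestCubic_div_iff {k x y : K} (hy : y ≠ 0) :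
    (simplestCubic k).IsRoot (x / y) ↔ simplestCubicNum x y = k * simplestCubicDen x y := by
  have homogenize : (x / y) ^ 3 - k * (x / y) ^ 2 + (k - 3) * (x / y) + 1 =
      (simplestCubicNum x y - k * simplestCubicDen x y) / y ^ 3 := by
    simp only [simplestCubicNum, simplestCubicDen]
    field_simp
    ring
  rw [isRoot_simplestCubic_iff, homogenize, div_eq_zero_iff, or_iff_left (pow_ne_zero 3 hy),
    sub_eq_zero]

theorem stmt7_general {k α c d : K} (hα : (simplestCubic k).IsRoot α)
    (hD : c ^ 3 + 3 * c ^ 2 * d - c ^ 2 * d * k - c * d ^ 2 * k - d ^ 3 ≠ 0)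
    (hden : c * α + d ≠ 0) :
    (simplestCubic ((c ^ 3 * k + 9 * c ^ 2 * d + 9 * c * d ^ 2 - 3 * c * d ^ 2 * k - d ^ 3 * k) /
      (c ^ 3 + 3 * c ^ 2 * d - c ^ 2 * d * k - c * d ^ 2 * k - d ^ 3))).IsRoot
      (((c + d) * α - c) / (c * α + d)) := by
  set T := c ^ 3 * k + 9 * c ^ 2 * d + 9 * c * d ^ 2 - 3 * c * d ^ 2 * k - d ^ 3 * k
  set D := c ^ 3 + 3 * c ^ 2 * d - c ^ 2 * d * k - c * d ^ 2 * k - d ^ 3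
  have T_eq : T = 9 * simplestCubicDen (-d) c - k * simplestCubicNum (-c) d := by
    simp only [T, simplestCubicNum, simplestCubicDen]
    ring
  have D_eq : D = simplestCubicNum (-d) c - k * simplestCubicDen (-d) c := by
    simp only [D, simplestCubicNum, simplestCubicDen]
    ring
  have fiber : simplestCubicNum α 1 = k * simplestCubicDen α 1 := by
    rwa [← isRoot_simplestCubic_div_iff one_ne_zero, div_one]
  have num_eq : simplestCubicNum ((c + d) * α - c) (c * α + d) = -T * simplestCubicDen α 1 := by
    have map_num := simplestCubicNum_mobius c d α 1
    rw [mul_one, mul_one, fiber] at map_num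
    rw [map_num, T_eq]
    ring
  have den_eq : simplestCubicDen ((c + d) * α - c) (c * α + d) = -D * simplestCubicDen α 1 := by
    have map_den := simplestCubicDen_mobius c d α 1
    rw [mul_one, mul_one, fiber] at map_den
    rw [map_den, D_eq]
    ring
  rw [isRoot_simplestCubic_div_iff hden, num_eq, den_eq]
  field_simp

end Field

theorem stmt7 (k : ℚ) (α : ℂ)
    (hα : α ^ 3 - (k : ℂ) * α ^ 2 + ((k : ℂ) - 3) * α + 1 = 0)
    (hαQ : α ∉ Set.range ((↑) : ℚ → ℂ))
    (c d : ℤ) (hcd : ¬(c = 0 ∧ d = 0))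
    (hD : (c : ℚ) ^ 3 + 3 * c ^ 2 * d - c ^ 2 * d * k - c * d ^ 2 * k - d ^ 3 ≠ 0)
    (hden : (c : ℂ) * α + d ≠ 0) :
    letI t : ℚ := ((c : ℚ) ^ 3 * k + 9 * c ^ 2 * d + 9 * c * d ^ 2 - 3 * c * d ^ 2 * k
        - d ^ 3 * k) /
      ((c : ℚ) ^ 3 + 3 * c ^ 2 * d - c ^ 2 * d * k - c * d ^ 2 * k - d ^ 3)
    letI ω : ℂ := (((c : ℂ) + d) * α - c) / ((c : ℂ) * α + d)
    ω ^ 3 - (t : ℂ) * ω ^ 2 + ((t : ℂ) - 3) * ω + 1 = 0 := by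
  push_cast
  exact isRoot_simplestCubic_iff.1 <|
    stmt7_general (isRoot_simplestCubic_iff.2 hα) (by exact_mod_cast hD) hden
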